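/- arXiv:1705.08074 — 2 statements merged into one kernel-verified Lean document; each statement's English description precedes it below -/
import Mathlib

section
/- For every block array s the following identities hold: c_{s00} = p − h⁰⁰_s/p; c_{s01} = z¹_s − h¹_s/p; and c_{s11} = η + z²_s − h²_s/p − 2h³_s/p. -/
open Matrix

namespace TwoDim

/-- The set of plots of an `a × b` block. -/
abbrev Plot (a b : ℕ) := Fin a × Fin b

/-- A block array: an assignment of one of `t` treatments to each plot. -/
abbrev BlockArray (a b t : ℕ) := Plot a b → Fin t

/-- The all-ones matrix. -/
def Jmat (n : Type*) : Matrix n n ℝ := Matrix.of fun _ _ => 1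

/-- `B_m = I - J/m`. -/
noncomputable def Bmat (n : Type*) [Fintype n] [DecidableEq n] : Matrix n n ℝ :=
  1 - ((Fintype.card n : ℝ))⁻¹ • Jmat n

variable {a b t : ℕ}

/-- The treatment incidence matrix `T_s`. -/
def Tmat (s : BlockArray a b t) : Matrix (Plot a b) (Fin t) ℝ :=
  Matrix.of fun q k => if s q = k then 1 else 0

/-- Two plots are neighbors if they agree in one coordinate and differ by 1 in the other. -/
def Neighbor (q r : Plot a b) : Prop :=
  (q.1 = r.1 ∧ (q.2.val + 1 = r.2.val ∨ r.2.val + 1 = q.2.val)) ∨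
  (q.2 = r.2 ∧ (q.1.val + 1 = r.1.val ∨ r.1.val + 1 = q.1.val))

instance (q r : Plot a b) : Decidable (Neighbor q r) := by
  unfold Neighbor; infer_instance

/-- The adjacency matrix of the neighbor relation. -/
def Mmat (a b : ℕ) : Matrix (Plot a b) (Plot a b) ℝ :=
  Matrix.of fun q r => if Neighbor q r then 1 else 0

/-- `F_s = M T_s`. -/
def Fmat (s : BlockArray a b t) : Matrix (Plot a b) (Fin t) ℝ :=
  Mmat a b * Tmat s

/-- `B̃ = Σ⁻¹ − Σ⁻¹ J Σ⁻¹ / (1'Σ⁻¹1)`. -/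
noncomputable def Btilde (Sig : Matrix (Plot a b) (Plot a b) ℝ) :
    Matrix (Plot a b) (Plot a b) ℝ :=
  Sig⁻¹ - (∑ i, ∑ j, Sig⁻¹ i j)⁻¹ • (Sig⁻¹ * Jmat (Plot a b) * Sig⁻¹)

/-- `C_{s00} = T_s' W T_s` (with `W` playing the role of `B̃`). -/
def Cs00 (W : Matrix (Plot a b) (Plot a b) ℝ) (s : BlockArray a b t) :
    Matrix (Fin t) (Fin t) ℝ := (Tmat s)ᵀ * W * Tmat s

/-- `C_{s01} = T_s' W F_s`. -/
def Cs01 (W : Matrix (Plot a b) (Plot a b) ℝ) (s : BlockArray a b t) :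
    Matrix (Fin t) (Fin t) ℝ := (Tmat s)ᵀ * W * Fmat s

/-- `C_{s11} = F_s' W F_s`. -/
def Cs11 (W : Matrix (Plot a b) (Plot a b) ℝ) (s : BlockArray a b t) :
    Matrix (Fin t) (Fin t) ℝ := (Fmat s)ᵀ * W * Fmat s

/-- `c_{s00} = tr(B_t C_{s00})`. -/
noncomputable def cs00 (W : Matrix (Plot a b) (Plot a b) ℝ) (s : BlockArray a b t) : ℝ :=
  Matrix.trace (Bmat (Fin t) * Cs00 W s)

noncomputable def cs01 (W : Matrix (Plot a b) (Plot a b) ℝ) (s : BlockArray a b t) : ℝ :=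
  Matrix.trace (Bmat (Fin t) * Cs01 W s)

noncomputable def cs11 (W : Matrix (Plot a b) (Plot a b) ℝ) (s : BlockArray a b t) : ℝ :=
  Matrix.trace (Bmat (Fin t) * Cs11 W s)

/-- The quadratic `q_s(x) = c_{s00} + 2 c_{s01} x + c_{s11} x²`. -/
noncomputable def qpoly (W : Matrix (Plot a b) (Plot a b) ℝ) (s : BlockArray a b t) (x : ℝ) : ℝ :=
  cs00 W s + 2 * cs01 W s * x + cs11 W s * x ^ 2

/-- A measure on the set of block arrays: nonnegative weights summing to one. -/
def IsMeasure (ξ : BlockArray a b t → ℝ) : Prop :=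
  (∀ s, 0 ≤ ξ s) ∧ ∑ s, ξ s = 1

noncomputable def Cm00 (W : Matrix (Plot a b) (Plot a b) ℝ) (ξ : BlockArray a b t → ℝ) :
    Matrix (Fin t) (Fin t) ℝ := ∑ s, ξ s • Cs00 W s

noncomputable def Cm01 (W : Matrix (Plot a b) (Plot a b) ℝ) (ξ : BlockArray a b t → ℝ) :
    Matrix (Fin t) (Fin t) ℝ := ∑ s, ξ s • Cs01 W s

noncomputable def Cm11 (W : Matrix (Plot a b) (Plot a b) ℝ) (ξ : BlockArray a b t → ℝ) :
    Matrix (Fin t) (Fin t) ℝ := ∑ s, ξ s • Cs11 W s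

noncomputable def cm00 (W : Matrix (Plot a b) (Plot a b) ℝ) (ξ : BlockArray a b t → ℝ) : ℝ :=
  ∑ s, ξ s * cs00 W s

noncomputable def cm01 (W : Matrix (Plot a b) (Plot a b) ℝ) (ξ : BlockArray a b t → ℝ) : ℝ :=
  ∑ s, ξ s * cs01 W s

noncomputable def cm11 (W : Matrix (Plot a b) (Plot a b) ℝ) (ξ : BlockArray a b t → ℝ) : ℝ :=
  ∑ s, ξ s * cs11 W s

/-- `q*_ξ = c_{ξ00} − c_{ξ01}²/c_{ξ11}`. -/
noncomputable def qstar (W : Matrix (Plot a b) (Plot a b) ℝ) (ξ : BlockArray a b t → ℝ) : ℝ :=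
  cm00 W ξ - (cm01 W ξ) ^ 2 / cm11 W ξ

/-- `G` is a generalized inverse of `A`. -/
def IsGenInv (A G : Matrix (Fin t) (Fin t) ℝ) : Prop := A * G * A = A

/-- Information matrix `C_{ξ00} − C_{ξ01} G C_{ξ10}` computed with a generalized inverse `G`. -/
noncomputable def InfoMat (W : Matrix (Plot a b) (Plot a b) ℝ) (ξ : BlockArray a b t → ℝ)
    (G : Matrix (Fin t) (Fin t) ℝ) : Matrix (Fin t) (Fin t) ℝ :=
  Cm00 W ξ - Cm01 W ξ * G * (Cm01 W ξ)ᵀ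

/-- A criterion `Φ` on `t×t` real symmetric matrices: concave, Loewner-nondecreasing, and
invariant under simultaneous permutations of rows and columns. -/
def GoodPhi (t : ℕ) (Φ : Matrix (Fin t) (Fin t) ℝ → ℝ) : Prop :=
  (∀ A B : Matrix (Fin t) (Fin t) ℝ, A.IsSymm → B.IsSymm → ∀ α : ℝ, 0 ≤ α → α ≤ 1 →
      α * Φ A + (1 - α) * Φ B ≤ Φ (α • A + (1 - α) • B)) ∧
  (∀ A B : Matrix (Fin t) (Fin t) ℝ, A.IsSymm → B.IsSymm → (B - A).PosSemidef → Φ A ≤ Φ B) ∧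
  (∀ (σ : Equiv.Perm (Fin t)) (C : Matrix (Fin t) (Fin t) ℝ), Φ (C.submatrix σ σ) = Φ C)

/-- Universal optimality of a measure `ξ`. -/
def UnivOptimal (W : Matrix (Plot a b) (Plot a b) ℝ) (ξ : BlockArray a b t → ℝ) : Prop :=
  ∀ η : BlockArray a b t → ℝ, IsMeasure η →
    ∀ G H : Matrix (Fin t) (Fin t) ℝ, IsGenInv (Cm11 W ξ) G → IsGenInv (Cm11 W η) H →
      ∀ Φ : Matrix (Fin t) (Fin t) ℝ → ℝ, GoodPhi t Φ →
        Φ (InfoMat W η H) ≤ Φ (InfoMat W ξ G)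

/-- A measure is symmetric if it is invariant under relabeling of the treatments. -/
def IsSymmetricMeasure (ξ : BlockArray a b t → ℝ) : Prop :=
  ∀ (σ : Equiv.Perm (Fin t)) (s : BlockArray a b t), ξ (fun q => σ (s q)) = ξ s

/-- A matrix is completely symmetric if it is of the form `αI + βJ`. -/
def ComplSym (A : Matrix (Fin t) (Fin t) ℝ) : Prop :=
  ∃ α β : ℝ, A = α • (1 : Matrix (Fin t) (Fin t) ℝ) + β • Jmat (Fin t)

/-- A measure is pseudo symmetric if `C_{ξ00}`, `C_{ξ01}`, `C_{ξ11}` are completely symmetric. -/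
def PseudoSym (W : Matrix (Plot a b) (Plot a b) ℝ) (ξ : BlockArray a b t → ℝ) : Prop :=
  ComplSym (Cm00 W ξ) ∧ ComplSym (Cm01 W ξ) ∧ ComplSym (Cm11 W ξ)

/-- `r(x) = max_{s∈S} q_s(x)`. -/
noncomputable def rfun {a b : ℕ} (t : ℕ) (W : Matrix (Plot a b) (Plot a b) ℝ) (x : ℝ) : ℝ :=
  sSup (Set.range fun s : BlockArray a b t => qpoly W s x)

/-- `min_{s∈S} q_s(x)`. -/
noncomputable def rmin {a b : ℕ} (t : ℕ) (W : Matrix (Plot a b) (Plot a b) ℝ) (x : ℝ) : ℝ :=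
  sInf (Set.range fun s : BlockArray a b t => qpoly W s x)

/-- Number of plots assigned treatment `k` by `s`. -/
noncomputable def f0 (s : BlockArray a b t) (k : Fin t) : ℕ :=
  {q : Plot a b | s q = k}.ncard

/-- Replications of `k` among the columns `1,…,b−1`. -/
noncomputable def f1 (s : BlockArray a b t) (k : Fin t) : ℕ :=
  {q : Plot a b | s q = k ∧ q.2.val + 1 < b}.ncard

/-- Replications of `k` among the columns `2,…,b`. -/
noncomputable def f2 (s : BlockArray a b t) (k : Fin t) : ℕ :=
  {q : Plot a b | s q = k ∧ 1 ≤ q.2.val}.ncard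

/-- Replications of `k` among the rows `1,…,a−1`. -/
noncomputable def f3 (s : BlockArray a b t) (k : Fin t) : ℕ :=
  {q : Plot a b | s q = k ∧ q.1.val + 1 < a}.ncard

/-- Replications of `k` among the rows `2,…,a`. -/
noncomputable def f4 (s : BlockArray a b t) (k : Fin t) : ℕ :=
  {q : Plot a b | s q = k ∧ 1 ≤ q.1.val}.ncard

noncomputable def fc (s : BlockArray a b t) : ℕ → Fin t → ℕ
  | 0 => f0 s
  | 1 => f1 s
  | 2 => f2 s
  | 3 => f3 s
  | 4 => f4 s
  | _ => fun _ => 0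

/-- `h^{uv}_s = Σ_k f^u_{s,k} f^v_{s,k}`. -/
noncomputable def hval (s : BlockArray a b t) (u v : ℕ) : ℝ :=
  ∑ k : Fin t, (fc s u k : ℝ) * (fc s v k : ℝ)

noncomputable def h00 (s : BlockArray a b t) : ℝ := hval s 0 0

noncomputable def h1 (s : BlockArray a b t) : ℝ :=
  hval s 0 1 + hval s 0 2 + hval s 0 3 + hval s 0 4

noncomputable def h2 (s : BlockArray a b t) : ℝ :=
  hval s 1 1 + hval s 2 2 + hval s 3 3 + hval s 4 4

noncomputable def h3 (s : BlockArray a b t) : ℝ :=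
  hval s 1 2 + hval s 1 3 + hval s 1 4 + hval s 2 3 + hval s 2 4 + hval s 3 4

/-- `z¹_{s,r}`: horizontally adjacent pairs of plots receiving the same treatment. -/
noncomputable def zr1 (s : BlockArray a b t) : ℕ :=
  {qr : Plot a b × Plot a b |
    qr.1.1 = qr.2.1 ∧ qr.1.2.val + 1 = qr.2.2.val ∧ s qr.1 = s qr.2}.ncard

noncomputable def zr2 (s : BlockArray a b t) : ℕ :=
  {qr : Plot a b × Plot a b |
    qr.1.1 = qr.2.1 ∧ qr.1.2.val + 2 = qr.2.2.val ∧ s qr.1 = s qr.2}.ncard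

noncomputable def zc1 (s : BlockArray a b t) : ℕ :=
  {qr : Plot a b × Plot a b |
    qr.1.2 = qr.2.2 ∧ qr.1.1.val + 1 = qr.2.1.val ∧ s qr.1 = s qr.2}.ncard

noncomputable def zc2 (s : BlockArray a b t) : ℕ :=
  {qr : Plot a b × Plot a b |
    qr.1.2 = qr.2.2 ∧ qr.1.1.val + 2 = qr.2.1.val ∧ s qr.1 = s qr.2}.ncard

/-- pairs `(i,j)`, `(i−1,j+1)` with the same treatment. -/
noncomputable def zd1 (s : BlockArray a b t) : ℕ :=
  {qr : Plot a b × Plot a b |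
    qr.2.1.val + 1 = qr.1.1.val ∧ qr.1.2.val + 1 = qr.2.2.val ∧ s qr.1 = s qr.2}.ncard

/-- pairs `(i,j)`, `(i+1,j+1)` with the same treatment. -/
noncomputable def zd2 (s : BlockArray a b t) : ℕ :=
  {qr : Plot a b × Plot a b |
    qr.1.1.val + 1 = qr.2.1.val ∧ qr.1.2.val + 1 = qr.2.2.val ∧ s qr.1 = s qr.2}.ncard

noncomputable def z1 (s : BlockArray a b t) : ℝ := 2 * zr1 s + 2 * zc1 s

noncomputable def z2 (s : BlockArray a b t) : ℝ :=
  2 * zr2 s + 2 * zc2 s + 4 * zd1 s + 4 * zd2 s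

/-- `η = 4p − 2a − 2b − 2(8ab − 7a − 7b + 4)/t + 4(2p − a − b)²/(pt)` where `p = ab`. -/
noncomputable def eta (a b t : ℕ) : ℝ :=
  4 * ((a : ℝ) * b) - 2 * a - 2 * b - 2 * (8 * (a : ℝ) * b - 7 * a - 7 * b + 4) / t +
    4 * (2 * (a : ℝ) * b - a - b) ^ 2 / (((a : ℝ) * b) * t)

/-- A corner plot of the `a × b` block. -/
def IsCorner (q : Plot a b) : Prop :=
  (q.1.val = 0 ∨ q.1.val + 1 = a) ∧ (q.2.val = 0 ∨ q.2.val + 1 = b)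

/-- Treatment `k` is significant in `s`: it occupies exactly two plots, which are
neighbors, at least one of them being a corner plot. -/
def Significant (s : BlockArray a b t) (k : Fin t) : Prop :=
  ∃ u v : Plot a b, u ≠ v ∧ {q : Plot a b | s q = k} = {u, v} ∧
    Neighbor u v ∧ (IsCorner u ∨ IsCorner v)

/-- Treatment `k` is strictly significant in `s`: both of its two plots are corners. -/
def StrictSignificant (s : BlockArray a b t) (k : Fin t) : Prop :=
  ∃ u v : Plot a b, u ≠ v ∧ {q : Plot a b | s q = k} = {u, v} ∧
    Neighbor u v ∧ IsCorner u ∧ IsCorner v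

/-- `Q_i`: block arrays with exactly `i` significant treatments in which every other
treatment appears at most once. -/
def Qset (a b t : ℕ) (i : ℕ) : Set (BlockArray a b t) :=
  {s | {k : Fin t | Significant s k}.ncard = i ∧
       ∀ k : Fin t, ¬ Significant s k → f0 s k ≤ 1}

/-- `Q_j*`: members of `Q_j` whose significant treatments are all strictly significant. -/
def QsetStar (a b t : ℕ) (j : ℕ) : Set (BlockArray a b t) :=
  {s | s ∈ Qset a b t j ∧ ∀ k : Fin t, Significant s k → StrictSignificant s k}

/-- Treatment `k` is connected in `s`. -/
def ConnectedIn (s : BlockArray a b t) (k : Fin t) : Prop :=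
  ∀ q r : Plot a b, s q = k → s r = k →
    Relation.ReflTransGen (fun u v => Neighbor u v ∧ s u = k ∧ s v = k) q r

/-! ### Helper lemmas -/

theorem ncard_eq_sum {α : Type*} [Fintype α] (P : α → Prop) [DecidablePred P] :
    (({x | P x}.ncard : ℕ) : ℝ) = ∑ x, if P x then (1 : ℝ) else 0 := by
  rw [Set.ncard_eq_toFinset_card', Finset.sum_boole]
  congr 2
  ext x
  simp

/-- directed step on a path -/
def stp {n : ℕ} (i j : Fin n) : ℝ := if i.val + 1 = j.val then 1 else 0

/-- double directed step on a path -/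
def stp2 {n : ℕ} (i j : Fin n) : ℝ := if i.val + 2 = j.val then 1 else 0

/-- the identity kernel -/
def idk {n : ℕ} (i j : Fin n) : ℝ := if i = j then 1 else 0

/-- indicator of a successor existing -/
def hi {n : ℕ} (i : Fin n) : ℝ := if i.val + 1 < n then 1 else 0

/-- indicator of a predecessor existing -/
def lo {n : ℕ} (i : Fin n) : ℝ := if 1 ≤ i.val then 1 else 0

theorem sum_stp_mul {n : ℕ} (i : Fin n) (g : Fin n → ℝ) :
    ∑ k, stp i k * g k = if h : i.val + 1 < n then g ⟨i.val + 1, h⟩ else 0 := by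
  split_ifs with h
  · rw [Finset.sum_eq_single ⟨i.val + 1, h⟩]
    · simp [stp]
    · intro k _ hk
      have : ¬ (i.val + 1 = k.val) := fun e => hk (Fin.ext e.symm)
      simp [stp, this]
    · simp
  · apply Finset.sum_eq_zero
    intro k _
    have : ¬ (i.val + 1 = k.val) := by omega
    simp [stp, this]

theorem sum_stp_mul' {n : ℕ} (i : Fin n) (g : Fin n → ℝ) :
    ∑ k, stp k i * g k = if h : 1 ≤ i.val then g ⟨i.val - 1, by omega⟩ else 0 := by
  split_ifs with h
  · rw [Finset.sum_eq_single ⟨i.val - 1, by omega⟩]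
    · have : i.val - 1 + 1 = i.val := by omega
      simp [stp, this]
    · intro k _ hk
      have : ¬ (k.val + 1 = i.val) := fun e => hk (Fin.ext (by simp; omega))
      simp [stp, this]
    · simp
  · apply Finset.sum_eq_zero
    intro k _
    have : ¬ (k.val + 1 = i.val) := by omega
    simp [stp, this]

theorem sum_stp {n : ℕ} (i : Fin n) : ∑ k, stp i k = hi i := by
  have := sum_stp_mul i (fun _ => 1)
  simpa [hi] using this

theorem sum_stp' {n : ℕ} (i : Fin n) : ∑ k, stp k i = lo i := by
  have := sum_stp_mul' i (fun _ => 1)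
  simpa [lo] using this

theorem sum_stp_stp {n : ℕ} (i j : Fin n) : ∑ k, stp i k * stp j k = idk i j * hi i := by
  rw [sum_stp_mul]
  simp only [stp, idk, hi, Fin.ext_iff]
  split_ifs <;> first | omega | simp

theorem sum_stp_stp' {n : ℕ} (i j : Fin n) : ∑ k, stp k i * stp k j = idk i j * lo i := by
  rw [sum_stp_mul']
  simp only [stp, idk, lo, Fin.ext_iff]
  split_ifs <;> first | omega | simp

theorem sum_stp_mid {n : ℕ} (i j : Fin n) : ∑ k, stp i k * stp k j = stp2 i j := by
  rw [sum_stp_mul]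
  simp only [stp, stp2]
  split_ifs <;> first | omega | simp

/-- path adjacency -/
def adj {n : ℕ} (i j : Fin n) : ℝ := stp i j + stp j i

theorem adj_comm {n : ℕ} (i j : Fin n) : adj i j = adj j i := by
  unfold adj; ring

theorem idk_comm {n : ℕ} (i j : Fin n) : idk i j = idk j i := by
  unfold idk; simp [eq_comm]

theorem sum_adj {n : ℕ} (i : Fin n) : ∑ k, adj i k = hi i + lo i := by
  simp only [adj, Finset.sum_add_distrib, sum_stp, sum_stp']

theorem sum_adj_adj {n : ℕ} (i j : Fin n) : ∑ k, adj k i * adj k j =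
    idk i j * (hi i + lo i) + stp2 i j + stp2 j i := by
  have e : ∀ k, adj k i * adj k j = stp i k * stp j k + stp k i * stp k j
      + stp i k * stp k j + stp j k * stp k i := by
    intro k; unfold adj; ring
  simp only [e, Finset.sum_add_distrib, sum_stp_stp, sum_stp_stp', sum_stp_mid]
  ring

theorem sum_hi {n : ℕ} (hn : 2 ≤ n) : ∑ i : Fin n, hi i = (n : ℝ) - 1 := by
  obtain ⟨m, rfl⟩ : ∃ m, n = m + 1 := ⟨n - 1, by omega⟩
  rw [Fin.sum_univ_castSucc]
  simp [hi]

theorem sum_lo {n : ℕ} (hn : 2 ≤ n) : ∑ i : Fin n, lo i = (n : ℝ) - 1 := by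
  obtain ⟨m, rfl⟩ : ∃ m, n = m + 1 := ⟨n - 1, by omega⟩
  rw [Fin.sum_univ_succ]
  simp [lo]

theorem sum_deg {n : ℕ} (hn : 2 ≤ n) : ∑ i : Fin n, (hi i + lo i) = 2 * (n : ℝ) - 2 := by
  rw [Finset.sum_add_distrib, sum_hi hn, sum_lo hn]; ring

theorem sum_deg_sq {n : ℕ} (hn : 2 ≤ n) :
    ∑ i : Fin n, (hi i + lo i) ^ 2 = 4 * (n : ℝ) - 6 := by
  have e : ∀ i : Fin n, (hi i + lo i) ^ 2 = 3 * (hi i + lo i) - 2 := by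
    intro i
    unfold hi lo
    split_ifs <;> first | omega | norm_num
  simp only [e, Finset.sum_sub_distrib, ← Finset.mul_sum, sum_deg hn]
  simp
  ring

/-- degree of a plot -/
def dg (q : Plot a b) : ℝ := (hi q.1 + lo q.1) + (hi q.2 + lo q.2)

theorem sum_dg (ha : 2 ≤ a) (hb : 2 ≤ b) :
    ∑ q : Plot a b, dg q = 2 * (2 * (a : ℝ) * b - a - b) := by
  rw [Fintype.sum_prod_type]
  simp only [dg]
  simp_rw [Finset.sum_add_distrib (s := (Finset.univ : Finset (Fin b))) (f := fun _ => hi _ + lo _)]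
  rw [Finset.sum_add_distrib]
  rw [sum_deg hb]
  simp only [Finset.sum_const, Finset.card_univ, Fintype.card_fin, nsmul_eq_mul, ← Finset.mul_sum,
    sum_deg ha]
  ring

theorem sum_dg_sq (ha : 2 ≤ a) (hb : 2 ≤ b) :
    ∑ q : Plot a b, dg q * dg q = 2 * (8 * (a : ℝ) * b - 7 * a - 7 * b + 4) := by
  rw [Fintype.sum_prod_type]
  have e : ∀ x : Fin a, ∑ y : Fin b, dg (x, y) * dg (x, y) =
      b * (hi x + lo x) ^ 2 + (2 * (2 * (b : ℝ) - 2)) * (hi x + lo x) + (4 * (b : ℝ) - 6) := by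
    intro x
    rw [← sum_deg_sq hb, ← sum_deg hb]
    have e2 : ∀ y : Fin b, dg (x, y) * dg (x, y) =
      (hi x + lo x) ^ 2 + (2 * (hi x + lo x)) * (hi y + lo y) + (hi y + lo y) ^ 2 := by
      intro y; simp only [dg]; ring
    simp only [e2]
    rw [Finset.sum_add_distrib, Finset.sum_add_distrib, ← Finset.mul_sum]
    simp only [Finset.sum_const, Finset.card_univ, Fintype.card_fin, nsmul_eq_mul]
    ring
  simp only [e]
  rw [Finset.sum_add_distrib, Finset.sum_add_distrib, ← Finset.mul_sum, ← Finset.mul_sum,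
    sum_deg_sq ha, sum_deg ha]
  simp only [Finset.sum_const, Finset.card_univ, Fintype.card_fin, nsmul_eq_mul]
  ring

theorem Mmat_eq (q r : Plot a b) :
    Mmat a b q r = idk q.1 r.1 * adj q.2 r.2 + adj q.1 r.1 * idk q.2 r.2 := by
  obtain ⟨q1, q2⟩ := q
  obtain ⟨r1, r2⟩ := r
  simp only [Mmat, Matrix.of_apply, Neighbor, idk, adj, stp, Fin.ext_iff]
  split_ifs <;> first | omega | norm_num

theorem Mmat_comm (q r : Plot a b) : Mmat a b q r = Mmat a b r q := by
  rw [Mmat_eq, Mmat_eq, idk_comm q.1, idk_comm q.2, adj_comm q.1, adj_comm q.2]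

theorem sum_idk_mul {n : ℕ} (i : Fin n) (g : Fin n → ℝ) : ∑ k, idk i k * g k = g i := by
  simp [idk]

theorem sum_idk_mul' {n : ℕ} (i : Fin n) (g : Fin n → ℝ) : ∑ k, idk k i * g k = g i := by
  simp [idk]

theorem sum_Mmat (q : Plot a b) : ∑ r, Mmat a b q r = dg q := by
  rw [Fintype.sum_prod_type]
  simp only [Mmat_eq, Finset.sum_add_distrib, ← Finset.mul_sum]
  rw [sum_adj, sum_idk_mul q.1 (fun _ => hi q.2 + lo q.2)]
  have : ∑ y : Fin b, idk q.2 y = 1 := by simp [idk]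
  rw [this, ← Finset.sum_mul, sum_adj, dg]
  ring

theorem sum_Mmat_Mmat (r r' : Plot a b) : ∑ q, Mmat a b q r * Mmat a b q r' =
    idk r.1 r'.1 * idk r.2 r'.2 * dg r
    + idk r.1 r'.1 * (stp2 r.2 r'.2 + stp2 r'.2 r.2)
    + idk r.2 r'.2 * (stp2 r.1 r'.1 + stp2 r'.1 r.1)
    + 2 * (adj r.1 r'.1 * adj r.2 r'.2) := by
  rw [Fintype.sum_prod_type]
  have e : ∀ (x : Fin a) (y : Fin b), Mmat a b (x, y) r * Mmat a b (x, y) r' =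
      (idk x r.1 * idk x r'.1) * (adj y r.2 * adj y r'.2)
      + (idk x r.1 * adj x r'.1) * (idk y r'.2 * adj y r.2)
      + (idk x r'.1 * adj x r.1) * (idk y r.2 * adj y r'.2)
      + (adj x r.1 * adj x r'.1) * (idk y r.2 * idk y r'.2) := by
    intro x y
    simp only [Mmat_eq]; ring
  simp only [e, Finset.sum_add_distrib, ← Finset.mul_sum, ← Finset.sum_mul]
  simp only [sum_idk_mul', sum_adj_adj]
  rw [adj_comm r'.2, adj_comm r'.1, dg]
  ring

theorem trace_formula (X Y : Matrix (Plot a b) (Fin t) ℝ) :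
    Matrix.trace (Bmat (Fin t) * (Xᵀ * Bmat (Plot a b) * Y)) =
      ∑ q, ∑ k, X q k * Y q k
      - (∑ k, (∑ q, X q k) * (∑ q, Y q k)) / ((a : ℝ) * b)
      - (∑ q, (∑ k, X q k) * (∑ k, Y q k)) / t
      + (∑ q, ∑ k, X q k) * (∑ q, ∑ k, Y q k) / (((a : ℝ) * b) * t) := by
  have hJp : ∀ k l, (Xᵀ * Jmat (Plot a b) * Y) k l = (∑ q, X q k) * (∑ q, Y q l) := by
    intro k l
    simp [Matrix.mul_apply, Jmat, Finset.mul_sum]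
  have hXY : ∀ k l, (Xᵀ * Y) k l = ∑ q, X q k * Y q l := by
    intro k l
    simp [Matrix.mul_apply]
  have hJt : ∀ Z : Matrix (Fin t) (Fin t) ℝ,
      Matrix.trace (Jmat (Fin t) * Z) = ∑ k, ∑ l, Z k l := by
    intro Z
    simp only [Matrix.trace, Matrix.diag, Matrix.mul_apply, Jmat, Matrix.of_apply, one_mul]
    rw [Finset.sum_comm]
  have e : Bmat (Fin t) * (Xᵀ * Bmat (Plot a b) * Y) =
      Xᵀ * Y - ((a : ℝ) * b)⁻¹ • (Xᵀ * Jmat (Plot a b) * Y)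
      - (t : ℝ)⁻¹ • (Jmat (Fin t) * (Xᵀ * Y))
      + (((a : ℝ) * b)⁻¹ * (t : ℝ)⁻¹) • (Jmat (Fin t) * (Xᵀ * Jmat (Plot a b) * Y)) := by
    simp only [Bmat, Fintype.card_fin, Fintype.card_prod, Nat.cast_mul, Matrix.mul_sub,
      Matrix.sub_mul, Matrix.mul_one, Matrix.one_mul, Matrix.smul_mul, Matrix.mul_smul, smul_sub,
      smul_smul]
    abel
  rw [e]
  simp only [Matrix.trace_add, Matrix.trace_sub, Matrix.trace_smul, hJt, hXY, hJp, smul_eq_mul]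
  simp only [Matrix.trace, Matrix.diag, hXY, hJp]
  have e1 : ∑ k, ∑ q, X q k * Y q k = ∑ q, ∑ k, X q k * Y q k := Finset.sum_comm
  have e2 : ∑ k, ∑ l, ∑ q, X q k * Y q l = ∑ q, (∑ k, X q k) * (∑ k, Y q k) := by
    simp only [Finset.sum_mul_sum]
    rw [Finset.sum_comm]
    rw [Finset.sum_comm (s := (Finset.univ : Finset (Plot a b)))]
    rw [Finset.sum_comm]
    apply Finset.sum_congr rfl
    intro k _
    rw [Finset.sum_comm]
  have e3 : ∑ k, ∑ l, (∑ q, X q k) * (∑ q, Y q l)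
      = (∑ q, ∑ k, X q k) * (∑ q, ∑ k, Y q k) := by
    rw [← Finset.sum_mul_sum, Finset.sum_comm, Finset.sum_comm (f := fun k q => Y q k)]
  rw [e1, e2, e3]
  simp only [div_eq_mul_inv, mul_inv]
  ring

theorem sum_Tmat (s : BlockArray a b t) (q : Plot a b) : ∑ k, Tmat s q k = 1 := by
  simp [Tmat]

theorem sum_Fmat (s : BlockArray a b t) (q : Plot a b) : ∑ k, Fmat s q k = dg q := by
  simp only [Fmat, Matrix.mul_apply]
  rw [Finset.sum_comm]
  simp only [← Finset.mul_sum, sum_Tmat, mul_one, sum_Mmat]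

theorem sum_col_T (s : BlockArray a b t) (k : Fin t) : ∑ q, Tmat s q k = (f0 s k : ℝ) := by
  rw [f0, ncard_eq_sum]; rfl

theorem sum_col_F (s : BlockArray a b t) (k : Fin t) :
    ∑ q, Fmat s q k = (f1 s k : ℝ) + f2 s k + f3 s k + f4 s k := by
  simp only [Fmat, Matrix.mul_apply]
  rw [Finset.sum_comm]
  simp only [← Finset.sum_mul]
  have e : ∀ r : Plot a b, ∑ q, Mmat a b q r = dg r := by
    intro r
    rw [← sum_Mmat]
    exact Finset.sum_congr rfl fun q _ => Mmat_comm _ _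
  simp only [e, f1, f2, f3, f4, ncard_eq_sum, ← Finset.sum_add_distrib]
  apply Finset.sum_congr rfl
  intro q _
  simp only [dg, Tmat, hi, lo, Matrix.of_apply]
  by_cases h : s q = k
  · simp only [h, true_and, if_true]; ring
  · simp [h]

/-- same-treatment kernel -/
def sm (s : BlockArray a b t) (q r : Plot a b) : ℝ := if s q = s r then 1 else 0

theorem sm_comm (s : BlockArray a b t) (q r : Plot a b) : sm s q r = sm s r q := by
  simp [sm, eq_comm]

theorem sum_T_T (s : BlockArray a b t) (q r : Plot a b) :
    ∑ k, Tmat s q k * Tmat s r k = sm s q r := by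
  simp [Tmat, sm, eq_comm]

theorem sum_T_F (s : BlockArray a b t) (q : Plot a b) :
    ∑ k, Tmat s q k * Fmat s q k = ∑ r, Mmat a b q r * sm s q r := by
  simp only [Fmat, Matrix.mul_apply, Finset.mul_sum]
  rw [Finset.sum_comm]
  apply Finset.sum_congr rfl
  intro r _
  rw [← sum_T_T, Finset.mul_sum]
  apply Finset.sum_congr rfl
  intro k _
  ring

theorem sum_F_F (s : BlockArray a b t) :
    ∑ q, ∑ k, Fmat s q k * Fmat s q k =
      ∑ r, ∑ r', (∑ q, Mmat a b q r * Mmat a b q r') * sm s r r' := by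
  have e : ∀ q, ∑ k, Fmat s q k * Fmat s q k =
      ∑ r, ∑ r', (Mmat a b q r * Mmat a b q r') * sm s r r' := by
    intro q
    simp only [Fmat, Matrix.mul_apply, Finset.sum_mul_sum]
    rw [Finset.sum_comm]
    apply Finset.sum_congr rfl
    intro r _
    rw [Finset.sum_comm]
    apply Finset.sum_congr rfl
    intro r' _
    rw [← sum_T_T, Finset.mul_sum]
    apply Finset.sum_congr rfl
    intro k _
    ring
  simp only [e]
  rw [Finset.sum_comm]
  apply Finset.sum_congr rfl
  intro r _
  rw [Finset.sum_comm]
  apply Finset.sum_congr rfl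
  intro r' _
  rw [Finset.sum_mul]

/-- sum of a kernel over same-treatment pairs -/
def ksum (s : BlockArray a b t) (K : Plot a b → Plot a b → ℝ) : ℝ :=
  ∑ q, ∑ r, K q r * sm s q r

theorem ksum_swap (s : BlockArray a b t) (K : Plot a b → Plot a b → ℝ) :
    ksum s (fun q r => K r q) = ksum s K := by
  unfold ksum
  rw [Finset.sum_comm]
  simp only [sm_comm s]

theorem ksum_add (s : BlockArray a b t) (K L : Plot a b → Plot a b → ℝ) :
    ksum s (fun q r => K q r + L q r) = ksum s K + ksum s L := by
  simp only [ksum, add_mul, Finset.sum_add_distrib]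

theorem ksum_smul (s : BlockArray a b t) (c : ℝ) (K : Plot a b → Plot a b → ℝ) :
    ksum s (fun q r => c * K q r) = c * ksum s K := by
  simp only [ksum, mul_assoc, Finset.mul_sum]

theorem zr1_eq (s : BlockArray a b t) :
    (zr1 s : ℝ) = ksum s fun q r => idk q.1 r.1 * stp q.2 r.2 := by
  rw [zr1, ncard_eq_sum, Fintype.sum_prod_type]
  simp only [ksum, idk, stp, sm, ite_and, ite_mul, one_mul, zero_mul]

theorem zc1_eq (s : BlockArray a b t) :
    (zc1 s : ℝ) = ksum s fun q r => idk q.2 r.2 * stp q.1 r.1 := by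
  rw [zc1, ncard_eq_sum, Fintype.sum_prod_type]
  simp only [ksum, idk, stp, sm, ite_and, ite_mul, one_mul, zero_mul]

theorem zr2_eq (s : BlockArray a b t) :
    (zr2 s : ℝ) = ksum s fun q r => idk q.1 r.1 * stp2 q.2 r.2 := by
  rw [zr2, ncard_eq_sum, Fintype.sum_prod_type]
  simp only [ksum, idk, stp2, sm, ite_and, ite_mul, one_mul, zero_mul]

theorem zc2_eq (s : BlockArray a b t) :
    (zc2 s : ℝ) = ksum s fun q r => idk q.2 r.2 * stp2 q.1 r.1 := by
  rw [zc2, ncard_eq_sum, Fintype.sum_prod_type]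
  simp only [ksum, idk, stp2, sm, ite_and, ite_mul, one_mul, zero_mul]

theorem zd1_eq (s : BlockArray a b t) :
    (zd1 s : ℝ) = ksum s fun q r => stp r.1 q.1 * stp q.2 r.2 := by
  rw [zd1, ncard_eq_sum, Fintype.sum_prod_type]
  simp only [ksum, stp, sm, ite_and, ite_mul, one_mul, zero_mul]

theorem zd2_eq (s : BlockArray a b t) :
    (zd2 s : ℝ) = ksum s fun q r => stp q.1 r.1 * stp q.2 r.2 := by
  rw [zd2, ncard_eq_sum, Fintype.sum_prod_type]
  simp only [ksum, stp, sm, ite_and, ite_mul, one_mul, zero_mul]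

theorem sum_T_F_z1 (s : BlockArray a b t) :
    ∑ q, ∑ k, Tmat s q k * Fmat s q k = z1 s := by
  simp only [sum_T_F]
  change ksum s (Mmat a b) = _
  have e : Mmat a b = fun q r =>
      ((idk q.1 r.1 * stp q.2 r.2 + idk r.1 q.1 * stp r.2 q.2)
      + (idk q.2 r.2 * stp q.1 r.1 + idk r.2 q.2 * stp r.1 q.1)) := by
    funext q r
    rw [Mmat_eq, idk_comm r.1, idk_comm r.2, adj, adj]
    ring
  rw [e, ksum_add, ksum_add, ksum_add,
    ksum_swap s (fun q r => idk q.1 r.1 * stp q.2 r.2),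
    ksum_swap s (fun q r => idk q.2 r.2 * stp q.1 r.1), ← zr1_eq, ← zc1_eq, z1]
  ring

theorem ksum_diag (s : BlockArray a b t) :
    ksum s (fun q r => idk q.1 r.1 * idk q.2 r.2 * dg q) = ∑ q : Plot a b, dg q := by
  unfold ksum
  apply Finset.sum_congr rfl
  intro q _
  rw [Finset.sum_eq_single q]
  · simp [idk, sm]
  · intro r _ hr
    have : idk q.1 r.1 * idk q.2 r.2 = 0 := by
      by_contra h
      apply hr
      unfold idk at h
      split_ifs at h with h1 h2 <;> simp_all [Prod.ext_iff]
    simp only [this, zero_mul]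
  · simp

theorem sum_F_F_z2 (s : BlockArray a b t) :
    ∑ q, ∑ k, Fmat s q k * Fmat s q k = ∑ q : Plot a b, dg q + z2 s := by
  rw [sum_F_F]
  change ksum s (fun r r' => ∑ q, Mmat a b q r * Mmat a b q r') = _
  have e : (fun r r' : Plot a b => ∑ q, Mmat a b q r * Mmat a b q r') = fun q r =>
      (idk q.1 r.1 * idk q.2 r.2 * dg q
      + ((idk q.1 r.1 * stp2 q.2 r.2 + idk r.1 q.1 * stp2 r.2 q.2)
      + ((idk q.2 r.2 * stp2 q.1 r.1 + idk r.2 q.2 * stp2 r.1 q.1)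
      + 2 * ((stp r.1 q.1 * stp q.2 r.2 + stp q.1 r.1 * stp r.2 q.2)
      + (stp q.1 r.1 * stp q.2 r.2 + stp r.1 q.1 * stp r.2 q.2))))) := by
    funext q r
    rw [sum_Mmat_Mmat, idk_comm r.1, idk_comm r.2, adj, adj]
    ring
  rw [e, ksum_add, ksum_add, ksum_add, ksum_add, ksum_add, ksum_smul, ksum_add, ksum_add, ksum_add,
    ksum_swap s (fun q r => idk q.1 r.1 * stp2 q.2 r.2),
    ksum_swap s (fun q r => idk q.2 r.2 * stp2 q.1 r.1),
    ksum_swap s (fun q r => stp r.1 q.1 * stp q.2 r.2),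
    ksum_swap s (fun q r => stp q.1 r.1 * stp q.2 r.2),
    ← zr2_eq, ← zc2_eq, ← zd1_eq, ← zd2_eq, ksum_diag, z2]
  ring

/-- Lemma `core parameters`: explicit expressions for `c_{s00}`, `c_{s01}`
and `c_{s11}` when `B̃ = B_p`. -/
theorem cs_coefficients
    (a b t : ℕ) (ha : 2 ≤ a) (hab : a ≤ b) (ht : 2 ≤ t)
    (s : BlockArray a b t) :
    cs00 (Bmat (Plot a b)) s = ((a : ℝ) * b) - h00 s / ((a : ℝ) * b) ∧
    cs01 (Bmat (Plot a b)) s = z1 s - h1 s / ((a : ℝ) * b) ∧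
    cs11 (Bmat (Plot a b)) s
      = eta a b t + z2 s - h2 s / ((a : ℝ) * b) - 2 * h3 s / ((a : ℝ) * b) := by
  have hb : 2 ≤ b := ha.trans hab
  have ha0 : (a : ℝ) ≠ 0 := by positivity
  have hb0 : (b : ℝ) ≠ 0 := by positivity
  have ht0 : (t : ℝ) ≠ 0 := by positivity
  have hp : ∑ _q : Plot a b, (1 : ℝ) = (a : ℝ) * b := by simp
  refine ⟨?_, ?_, ?_⟩
  · rw [cs00, Cs00, trace_formula]
    simp only [sum_T_T, sum_Tmat, sum_col_T, h00, hval, fc, sm, if_true, mul_one, hp]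
    field_simp
    ring
  · rw [cs01, Cs01, trace_formula, sum_T_F_z1]
    simp only [sum_Tmat, sum_Fmat, sum_col_T, sum_col_F, h1, hval, fc, one_mul, hp, mul_add,
      Finset.sum_add_distrib]
    field_simp
    ring
  · rw [cs11, Cs11, trace_formula, sum_F_F_z2]
    simp only [sum_Fmat, sum_col_F]
    rw [sum_dg_sq ha hb, sum_dg ha hb]
    have e : ∑ k, ((f1 s k : ℝ) + f2 s k + f3 s k + f4 s k) * ((f1 s k : ℝ) + f2 s k + f3 s k + f4 s k)
        = h2 s + 2 * h3 s := by
      simp only [h2, h3, hval, fc, ← Finset.sum_add_distrib, Finset.mul_sum]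
      apply Finset.sum_congr rfl
      intro k _
      ring
    rw [e, eta]
    field_simp
    ring

end TwoDim
end

section
/- Assume a = b = 2 and t = p − 1 = 3. Then: (i) q_s(1/2) ≤ 2 for every block array s, with equality if and only if s ∈ Q₁* ∪ Q₂*; and (ii) for every real x ≠ 1/2, max_{s∈S} q_s(x) > 2. (That is, x* = 1/2, y* = 2 and Q = Q₁* ∪ Q₂*.) -/
open Matrix

namespace TwoDim

variable {a b t : ℕ}

/-- The array with the four given entries. -/
def arr (w x y z : Fin 3) : BlockArray 2 2 3 :=
  fun q => if q.1 = 0 then (if q.2 = 0 then w else x) else (if q.2 = 0 then y else z)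

lemma eq_arr (s : BlockArray 2 2 3) : s = arr (s (0, 0)) (s (0, 1)) (s (1, 0)) (s (1, 1)) := by
  funext ⟨i, j⟩
  fin_cases i <;> fin_cases j <;> simp [arr]

/-- Integer indicator. -/
def ind (s : BlockArray 2 2 3) (q : Plot 2 2) (k : Fin 3) : ℤ := if s q = k then 1 else 0

/-- Sum of squared replications. -/
def nn (s : BlockArray 2 2 3) : ℤ :=
  ∑ k, (ind s (0, 0) k + ind s (0, 1) k + ind s (1, 0) k + ind s (1, 1) k) ^ 2

/-- Sum of squared diagonal contrasts. -/
def dd (s : BlockArray 2 2 3) : ℤ :=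
  ∑ k, (ind s (0, 0) k - ind s (0, 1) k - ind s (1, 0) k + ind s (1, 1) k) ^ 2

lemma card_sq (s : BlockArray 2 2 3) :
    ∑ k, ((ind s (0, 0) k)^2 + (ind s (0, 1) k)^2 + (ind s (1, 0) k)^2 + (ind s (1, 1) k)^2) = 4 := by
  simp [ind, Finset.sum_add_distrib]

lemma qpoly_eq (s : BlockArray 2 2 3) (x : ℝ) :
    qpoly (Bmat (Plot 2 2)) s x =
      4 - (nn s : ℝ) / 4 + ((1 - 2 * x) ^ 2 - 1) * ((dd s : ℝ) / 4) := by
  have hsq := congrArg (Int.cast : ℤ → ℝ) (card_sq s)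
  have hT : ∀ q k, Tmat s q k = (ind s q k : ℝ) := by
    intro q k; simp [Tmat, ind]
  have hrow : ∀ q, (ind s q 2 : ℝ) = 1 - ind s q 0 - ind s q 1 := by
    intro q
    have h : ∑ k, ind s q k = 1 := by simp [ind]
    rw [Fin.sum_univ_three] at h
    have := congrArg (Int.cast : ℤ → ℝ) h
    push_cast at this
    linarith
  have hM : ∀ i j k l : Fin 2, Mmat 2 2 (i, j) (k, l) =
      if (i = k ∧ j ≠ l) ∨ (j = l ∧ i ≠ k) then 1 else 0 := by
    intro i j k l
    have h : Neighbor (i, j) (k, l) ↔ (i = k ∧ j ≠ l) ∨ (j = l ∧ i ≠ k) := by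
      revert i j k l; decide
    simp only [Mmat, Matrix.of_apply, h]
  have hB : ∀ q r, Bmat (Plot 2 2) q r = (if q = r then 1 else 0) - 1 / 4 := by
    intro q r
    simp [Bmat, Jmat, Matrix.one_apply]
  have hB3 : ∀ q r, Bmat (Fin 3) q r = (if q = r then 1 else 0) - 1 / 3 := by
    intro q r
    simp [Bmat, Jmat, Matrix.one_apply]
  simp only [nn, dd, Fin.sum_univ_three] at hsq ⊢
  push_cast at hsq ⊢
  have e4 : (4 : ℝ) = 4 := rfl
  simp only [qpoly, cs00, cs01, cs11, Cs00, Cs01, Cs11, Fmat, Matrix.trace, Matrix.diag,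
    Matrix.mul_apply, Matrix.transpose_apply, Fintype.sum_prod_type, Fin.sum_univ_two,
    Fin.sum_univ_three, hM, hB, hB3, hT]
  simp [hrow]
  simp [hrow] at hsq
  linear_combination hsq

/-- Decidable significance. -/
def Sg (s : BlockArray 2 2 3) (k : Fin 3) : Prop :=
  ∃ u v : Plot 2 2, u ≠ v ∧ (∀ q, s q = k ↔ (q = u ∨ q = v)) ∧ Neighbor u v

instance (s : BlockArray 2 2 3) (k : Fin 3) : Decidable (Sg s k) := by
  unfold Sg; infer_instance

lemma corner (q : Plot 2 2) : IsCorner q := by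
  revert q; unfold IsCorner; decide

lemma sig_iff (s : BlockArray 2 2 3) (k : Fin 3) : Significant s k ↔ Sg s k := by
  simp [Significant, Sg, corner, Set.ext_iff]

lemma ssig_iff (s : BlockArray 2 2 3) (k : Fin 3) : StrictSignificant s k ↔ Sg s k := by
  simp [StrictSignificant, Sg, corner, Set.ext_iff]

lemma qstar_iff (s : BlockArray 2 2 3) (i : ℕ) : s ∈ QsetStar 2 2 3 i ↔
    ((Finset.univ.filter fun k => Sg s k).card = i ∧
      ∀ k, ¬ Sg s k → (Finset.univ.filter fun q => s q = k).card ≤ 1) := by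
  simp only [QsetStar, Qset, f0, Set.mem_setOf_eq, sig_iff, ssig_iff, imp_self, implies_true,
    and_true, Set.ncard_eq_toFinset_card', Set.toFinset_setOf]

lemma finite_check : ∀ w x y z : Fin 3,
    8 ≤ nn (arr w x y z) + dd (arr w x y z) ∧
    (nn (arr w x y z) + dd (arr w x y z) = 8 ↔
      (((Finset.univ.filter fun k => Sg (arr w x y z) k).card = 1 ∨
        (Finset.univ.filter fun k => Sg (arr w x y z) k).card = 2) ∧
      ∀ k, ¬ Sg (arr w x y z) k →
        (Finset.univ.filter fun q => (arr w x y z) q = k).card ≤ 1)) := by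
  decide +kernel

/-- Theorem `t=p-1`, case `a = b = 2`, `t = 3`: `x* = 1/2`, `y* = 2` and
`Q = Q₁* ∪ Q₂*`. -/
theorem optimality_t_eq_p_sub_one_a_eq_b_eq_two :
    (∀ s : BlockArray 2 2 3,
       qpoly (Bmat (Plot 2 2)) s (1 / 2 : ℝ) ≤ 2 ∧
       (qpoly (Bmat (Plot 2 2)) s (1 / 2 : ℝ) = 2 ↔
         s ∈ QsetStar 2 2 3 1 ∪ QsetStar 2 2 3 2)) ∧
    (∀ x : ℝ, x ≠ (1 / 2 : ℝ) → (2 : ℝ) < rfun 3 (Bmat (Plot 2 2)) x) := by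
  refine ⟨fun s => ?_, fun x hx => ?_⟩
  · have h := finite_check (s (0, 0)) (s (0, 1)) (s (1, 0)) (s (1, 1))
    rw [← eq_arr s] at h
    obtain ⟨h1, h2⟩ := h
    have hq : qpoly (Bmat (Plot 2 2)) s (1 / 2 : ℝ) = 4 - ((nn s + dd s : ℤ) : ℝ) / 4 := by
      rw [qpoly_eq]; push_cast; ring
    rw [hq, Set.mem_union, qstar_iff, qstar_iff, ← or_and_right, ← h2]
    constructor
    · have : ((8 : ℤ) : ℝ) ≤ ((nn s + dd s : ℤ) : ℝ) := by exact_mod_cast h1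
      push_cast at this ⊢
      linarith
    · constructor
      · intro h
        have : ((nn s + dd s : ℤ) : ℝ) = ((8 : ℤ) : ℝ) := by push_cast at h ⊢; linarith
        exact_mod_cast this
      · intro h
        rw [h]; norm_num
  · have hn : nn (arr 0 0 1 2) = 6 := by decide +kernel
    have hd : dd (arr 0 0 1 2) = 2 := by decide +kernel
    have hle : qpoly (Bmat (Plot 2 2)) (arr 0 0 1 2) x ≤ rfun 3 (Bmat (Plot 2 2)) x :=
      le_csSup (Set.finite_range _).bddAbove ⟨_, rfl⟩
    refine lt_of_lt_of_le ?_ hle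
    rw [qpoly_eq, hn, hd]
    have : 0 < (1 - 2 * x) ^ 2 := by
      apply sq_pos_of_ne_zero
      intro h
      apply hx; linarith
    push_cast
    linarith

end TwoDim
end
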